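/- Let d ≥ 2 be an integer, α ∈ (0,1), β > (2α−1)/(d−1), and δ ∈ (0, δ_*) where δ_* := min{1−α, (d−1)β+1−2α}. Let b_L : (0,∞) → (0,∞) and b_N : (0,∞) → ℝ be differentiable and satisfy, as r → 0⁺: b_L(r)/r^{2α} → 1, b_N(r)/r^{2α} → β, b_L'(r)/r^{2α−1} → 2α, and b_N'(r)/r^{2α−1} → 2αβ. With Φ(r) := ∫₀^r (ρ^{−δ}/b_L(ρ)) exp(−(d−1)∫_ρ^r b_N(u)/(b_L(u)u) du) dρ, define q̃(r) := r^{−δ}/b_L(r) + (d−1)(1 − b_N(r)/b_L(r)) Φ(r)/r. Then there exists ℓ > 0 such that q̃ is differentiable on (0,ℓ) with q̃'(r) ≤ 0 for all r ∈ (0,ℓ); in particular q̃ is nonincreasing on (0,ℓ). -/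

import Mathlib

open MeasureTheory Set Filter

/-!
Say that `f` has a power asymptotic `a r ^ s` at `0⁺` if `f r ~ a r ^ s` and this relation may be
differentiated once. Such functions form a calculus: sums, products and quotients act on `a r ^ s`
as they do on exact powers. The function `Φ` solves `Φ' + p Φ = r ^ (-δ) / b_L`, where
`p = (d - 1) b_N / (b_L r) ~ (d - 1) β / r`. With an integrating factor and l'Hôpital's rule,
`Φ` has the power asymptotic that balances the leading terms of this equation, namely
`r ^ σ / c` with `σ = 1 - 2 α - δ` and `c = (d - 1) β + σ`.
Hence `q̃` has the power asymptotic
`(1 + (d - 1) (1 - β) / c) r ^ (σ - 1) = (d - 2 α - δ) / c * r ^ (-(2 α + δ))`,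
whose coefficient is positive and whose exponent is negative.
-/

open Topology Asymptotics

/-- `HasPowerAsymp f a s` says that `f r ~ a r ^ s` as `r → 0⁺` and that this relation may be
differentiated: `f' r ~ s a r ^ (s - 1)`. When a coefficient vanishes, `~` is to be read as
convergence of the quotient to `0`. -/
structure HasPowerAsymp (f : ℝ → ℝ) (a s : ℝ) : Prop where
  differentiableAt : ∀ᶠ r in 𝓝[>] 0, DifferentiableAt ℝ f r
  tendsto : Tendsto (fun r ↦ f r / r ^ s) (𝓝[>] 0) (𝓝 a)
  tendsto_deriv : Tendsto (fun r ↦ deriv f r / r ^ (s - 1)) (𝓝[>] 0) (𝓝 (s * a))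

namespace HasPowerAsymp

variable {f g : ℝ → ℝ} {a b s t : ℝ}

protected theorem rpow (s : ℝ) : HasPowerAsymp (fun r ↦ r ^ s) 1 s where
  differentiableAt := by
    filter_upwards [self_mem_nhdsWithin] with r (hr : 0 < r)
    exact Real.differentiableAt_rpow_const_of_ne s hr.ne'
  tendsto := by
    refine tendsto_const_nhds.congr' ?_
    filter_upwards [self_mem_nhdsWithin] with r (hr : 0 < r)
    exact (div_self (Real.rpow_pos_of_pos hr s).ne').symm
  tendsto_deriv := by
    refine tendsto_const_nhds.congr' ?_
    filter_upwards [self_mem_nhdsWithin] with r (hr : 0 < r)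
    have := (Real.rpow_pos_of_pos hr (s - 1)).ne'
    rw [(Real.hasDerivAt_rpow_const (Or.inl hr.ne')).deriv]
    field_simp

protected theorem id : HasPowerAsymp (fun r ↦ r) 1 1 := by
  simpa using HasPowerAsymp.rpow 1

theorem const_mul (k : ℝ) (hf : HasPowerAsymp f a s) :
    HasPowerAsymp (fun r ↦ k * f r) (k * a) s where
  differentiableAt := hf.differentiableAt.mono fun _ h ↦ h.const_mul k
  tendsto := by simpa only [mul_div_assoc] using hf.tendsto.const_mul k
  tendsto_deriv := by
    simpa only [deriv_const_mul_field', mul_div_assoc, mul_left_comm] using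
      hf.tendsto_deriv.const_mul k

protected theorem const (k : ℝ) : HasPowerAsymp (fun _ ↦ k) k 0 := by
  simpa using (HasPowerAsymp.rpow 0).const_mul k

theorem add (hf : HasPowerAsymp f a s) (hg : HasPowerAsymp g b s) :
    HasPowerAsymp (fun r ↦ f r + g r) (a + b) s where
  differentiableAt := hf.differentiableAt.and hg.differentiableAt |>.mono fun _ h ↦ h.1.add h.2
  tendsto := by simpa only [add_div] using hf.tendsto.add hg.tendsto
  tendsto_deriv := by
    rw [mul_add]
    refine (hf.tendsto_deriv.add hg.tendsto_deriv).congr' ?_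
    filter_upwards [hf.differentiableAt, hg.differentiableAt] with r hfr hgr
    rw [deriv_fun_add hfr hgr, add_div]

theorem sub (hf : HasPowerAsymp f a s) (hg : HasPowerAsymp g b s) :
    HasPowerAsymp (fun r ↦ f r - g r) (a - b) s := by
  simpa [sub_eq_add_neg] using hf.add (hg.const_mul (-1))

theorem mul (hf : HasPowerAsymp f a s) (hg : HasPowerAsymp g b t) :
    HasPowerAsymp (fun r ↦ f r * g r) (a * b) (s + t) where
  differentiableAt := hf.differentiableAt.and hg.differentiableAt |>.mono fun _ h ↦ h.1.mul h.2
  tendsto := by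
    refine (hf.tendsto.mul hg.tendsto).congr' ?_
    filter_upwards [self_mem_nhdsWithin] with r (hr : 0 < r)
    rw [Real.rpow_add hr, mul_div_mul_comm]
  tendsto_deriv := by
    have hlim := (hf.tendsto_deriv.mul hg.tendsto).add (hf.tendsto.mul hg.tendsto_deriv)
    rw [show s * a * b + a * (t * b) = (s + t) * (a * b) by ring] at hlim
    refine hlim.congr' ?_
    filter_upwards [self_mem_nhdsWithin, hf.differentiableAt, hg.differentiableAt]
      with r (hr : 0 < r) hfr hgr
    have hs := (Real.rpow_pos_of_pos hr s).ne'
    have ht := (Real.rpow_pos_of_pos hr t).ne'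
    rw [deriv_fun_mul hfr hgr, Real.rpow_sub_one hr.ne', Real.rpow_sub_one hr.ne',
      Real.rpow_sub_one hr.ne', Real.rpow_add hr]
    field_simp

theorem eventually_ne_zero (hf : HasPowerAsymp f a s) (ha : a ≠ 0) :
    ∀ᶠ r in 𝓝[>] 0, f r ≠ 0 :=
  (hf.tendsto.eventually_ne ha).mono fun _ hr h ↦ hr (by rw [h, zero_div])

theorem inv (hf : HasPowerAsymp f a s) (ha : a ≠ 0) :
    HasPowerAsymp (fun r ↦ (f r)⁻¹) a⁻¹ (-s) where
  differentiableAt := by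
    filter_upwards [hf.differentiableAt, hf.eventually_ne_zero ha] with r hfr hr using hfr.inv hr
  tendsto := by
    refine (hf.tendsto.inv₀ ha).congr' ?_
    filter_upwards [self_mem_nhdsWithin] with r (hr : 0 < r)
    rw [Real.rpow_neg hr.le, inv_div_inv, inv_div]
  tendsto_deriv := by
    have hlim := (hf.tendsto_deriv.div (hf.tendsto.pow 2) (pow_ne_zero 2 ha)).neg
    rw [show -(s * a / a ^ 2) = -s * a⁻¹ by field_simp] at hlim
    refine hlim.congr' ?_
    filter_upwards [self_mem_nhdsWithin, hf.differentiableAt, hf.eventually_ne_zero ha]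
      with r (hr : 0 < r) hfr hfr₀
    have hs := (Real.rpow_pos_of_pos hr s).ne'
    rw [Pi.div_apply, deriv_fun_inv'' hfr hfr₀, Real.rpow_sub_one hr.ne',
      Real.rpow_sub_one hr.ne', Real.rpow_neg hr.le]
    field_simp

theorem div (hf : HasPowerAsymp f a s) (hg : HasPowerAsymp g b t) (hb : b ≠ 0) :
    HasPowerAsymp (fun r ↦ f r / g r) (a / b) (s - t) := by
  simpa only [div_eq_mul_inv, sub_eq_add_neg] using hf.mul (hg.inv hb)

theorem continuousAt (hf : HasPowerAsymp f a s) : ∀ᶠ r in 𝓝[>] 0, ContinuousAt f r :=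
  hf.differentiableAt.mono fun _ h ↦ h.continuousAt

theorem eventually_deriv_neg (hf : HasPowerAsymp f a s) (hsa : s * a < 0) :
    ∀ᶠ r in 𝓝[>] 0, deriv f r < 0 := by
  filter_upwards [self_mem_nhdsWithin, hf.tendsto_deriv.eventually_lt_const hsa]
    with r (hr : 0 < r) hneg
  simpa using (div_lt_iff₀ (Real.rpow_pos_of_pos hr (s - 1))).1 hneg

theorem exists_strictAntiOn (hf : HasPowerAsymp f a s) (hsa : s * a < 0) :
    ∃ ℓ > 0, (∀ r ∈ Ioo 0 ℓ, DifferentiableAt ℝ f r ∧ deriv f r < 0) ∧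
      StrictAntiOn f (Ioo 0 ℓ) := by
  obtain ⟨ℓ, hℓ, hderiv⟩ := mem_nhdsGT_iff_exists_Ioo_subset.1
    (hf.differentiableAt.and (hf.eventually_deriv_neg hsa))
  refine ⟨ℓ, hℓ, fun r hr ↦ hderiv hr, strictAntiOn_of_deriv_neg (convex_Ioo 0 ℓ) ?_ ?_⟩
  · exact fun r hr ↦ (hderiv hr).1.continuousAt.continuousWithinAt
  · exact fun r hr ↦ (hderiv (interior_subset hr)).2

end HasPowerAsymp

theorem integrableAtFilter_rpow_nhdsGT_zero {θ : ℝ} (hθ : -1 < θ) :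
    IntegrableAtFilter (fun r : ℝ ↦ r ^ θ) (𝓝[>] 0) :=
  ⟨Ioo 0 1, Ioo_mem_nhdsGT one_pos,
    (intervalIntegral.integrableOn_Ioo_rpow_iff one_pos).2 hθ⟩

theorem tendsto_rpow_nhdsGT_zero {θ : ℝ} (hθ : 0 < θ) :
    Tendsto (fun r : ℝ ↦ r ^ θ) (𝓝[>] 0) (𝓝 0) := by
  have h := (Real.continuousAt_rpow_const 0 θ (Or.inr hθ.le)).tendsto
  rw [Real.zero_rpow hθ.ne'] at h
  exact h.mono_left nhdsWithin_le_nhds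

theorem isBigO_rpow_of_tendsto_div {f : ℝ → ℝ} {a s : ℝ}
    (hf : Tendsto (fun r ↦ f r / r ^ s) (𝓝[>] 0) (𝓝 a)) :
    f =O[𝓝[>] 0] fun r ↦ r ^ s := by
  refine isBigO_of_div_tendsto_nhds ?_ a hf
  filter_upwards [self_mem_nhdsWithin] with r (hr : 0 < r) h
  exact absurd h (Real.rpow_pos_of_pos hr s).ne'

theorem isBigO_rpow_add_of_isBigO_rpow {f g : ℝ → ℝ} {s t : ℝ}
    (hf : f =O[𝓝[>] 0] fun r ↦ r ^ s) (hg : g =O[𝓝[>] 0] fun r ↦ r ^ t) :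
    (fun r ↦ f r * g r) =O[𝓝[>] 0] fun r ↦ r ^ (s + t) := by
  refine (hf.mul hg).congr' EventuallyEq.rfl ?_
  filter_upwards [self_mem_nhdsWithin] with r (hr : 0 < r)
  rw [Real.rpow_add hr]

theorem isBigO_rpow_of_hasDerivAt_mul {E p : ℝ → ℝ} {ν θ : ℝ}
    (hE : ∀ᶠ r in 𝓝[>] 0, 0 ≤ E r) (hderiv : ∀ᶠ r in 𝓝[>] 0, HasDerivAt E (p r * E r) r)
    (hp : Tendsto (fun r ↦ p r * r) (𝓝[>] 0) (𝓝 ν)) (hθ : θ < ν) :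
    E =O[𝓝[>] 0] fun r ↦ r ^ θ := by
  obtain ⟨R, hR : 0 < R, hER⟩ := mem_nhdsGT_iff_exists_Ioo_subset.1
    (hE.and (hderiv.and (hp.eventually_const_lt hθ)))
  have hquot : ∀ r ∈ Ioo 0 R,
      HasDerivAt (fun r ↦ E r * r ^ (-θ)) ((p r * r - θ) * (E r * r ^ (-θ) / r)) r := by
    intro r hr
    refine ((hER hr).2.1.mul (Real.hasDerivAt_rpow_const (Or.inl hr.1.ne'))).congr_deriv ?_
    have := hr.1.ne'
    rw [Real.rpow_sub_one hr.1.ne']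
    field_simp
    ring
  have hmono : MonotoneOn (fun r ↦ E r * r ^ (-θ)) (Ioo 0 R) := by
    refine monotoneOn_of_deriv_nonneg (convex_Ioo 0 R)
      (fun r hr ↦ (hquot r hr).continuousAt.continuousWithinAt)
      (fun r hr ↦ (hquot r (interior_subset hr)).differentiableAt.differentiableWithinAt) ?_
    intro r hr
    have hr := interior_subset hr
    rw [(hquot r hr).deriv]
    exact mul_nonneg (sub_nonneg.2 (hER hr).2.2.le) (div_nonneg
      (mul_nonneg (hER hr).1 (Real.rpow_nonneg hr.1.le _)) hr.1.le)
  refine IsBigO.of_bound (E (R / 2) * (R / 2) ^ (-θ)) ?_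
  filter_upwards [Ioo_mem_nhdsGT (half_pos hR)] with r hr
  have hrR : r ∈ Ioo 0 R := ⟨hr.1, hr.2.trans (half_lt_self hR)⟩
  have hle : E r * r ^ (-θ) ≤ E (R / 2) * (R / 2) ^ (-θ) :=
    hmono hrR ⟨half_pos hR, half_lt_self hR⟩ hr.2.le
  rw [Real.rpow_neg hr.1.le, ← div_eq_mul_inv, div_le_iff₀ (Real.rpow_pos_of_pos hr.1 θ)] at hle
  rwa [Real.norm_of_nonneg (hER hrR).1, Real.norm_of_nonneg (Real.rpow_nonneg hr.1.le θ)]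

section PrimitiveFromZero

variable {g : ℝ → ℝ}

theorem integrableAtFilter_of_isBigO_rpow {θ : ℝ}
    (hcont : ∀ᶠ r in 𝓝[>] 0, ContinuousAt g r) (hg : g =O[𝓝[>] 0] fun r ↦ r ^ θ) (hθ : -1 < θ) :
    IntegrableAtFilter g (𝓝[>] 0) := by
  obtain ⟨R, hR : 0 < R, hgR⟩ := mem_nhdsGT_iff_exists_Ioo_subset.1 hcont
  have hgR : ContinuousOn g (Ioo 0 R) := fun r hr ↦ (hgR hr).continuousWithinAt
  exact hg.integrableAtFilter
    ⟨Ioo 0 R, Ioo_mem_nhdsGT hR, hgR.aestronglyMeasurable measurableSet_Ioo⟩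
    (integrableAtFilter_rpow_nhdsGT_zero hθ)

theorem exists_forall_intervalIntegrable_of_integrableAtFilter
    (hg : IntegrableAtFilter g (𝓝[>] 0)) :
    ∃ R > 0, ∀ r ∈ Icc 0 R, IntervalIntegrable g volume 0 r := by
  obtain ⟨u, hu, hgu⟩ := hg
  obtain ⟨R, hR : 0 < R, hRu⟩ := mem_nhdsGT_iff_exists_Ioc_subset.1 hu
  refine ⟨R, hR, fun r hr ↦ (intervalIntegrable_iff_integrableOn_Ioc_of_le hr.1).2 ?_⟩
  exact hgu.mono_set ((Ioc_subset_Ioc_right hr.2).trans hRu)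

theorem eventually_hasDerivAt_integral_of_integrableAtFilter (hg : IntegrableAtFilter g (𝓝[>] 0))
    (hcont : ∀ᶠ r in 𝓝[>] 0, ContinuousAt g r) :
    ∀ᶠ r in 𝓝[>] 0, HasDerivAt (fun r ↦ ∫ ρ in (0 : ℝ)..r, g ρ) (g r) r := by
  obtain ⟨R, hR, hint⟩ := exists_forall_intervalIntegrable_of_integrableAtFilter hg
  obtain ⟨R', hR' : 0 < R', hcont⟩ := mem_nhdsGT_iff_exists_Ioo_subset.1 hcont
  filter_upwards [Ioo_mem_nhdsGT hR, Ioo_mem_nhdsGT hR'] with r hr hr'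
  exact intervalIntegral.integral_hasDerivAt_right (hint r (Ioo_subset_Icc_self hr))
    (ContinuousAt.stronglyMeasurableAtFilter isOpen_Ioo (fun x hx ↦ hcont hx) r hr') (hcont hr')

theorem tendsto_integral_nhdsGT_zero_of_integrableAtFilter
    (hg : IntegrableAtFilter g (𝓝[>] 0)) :
    Tendsto (fun r ↦ ∫ ρ in (0 : ℝ)..r, g ρ) (𝓝[>] 0) (𝓝 0) := by
  obtain ⟨R, hR, hint⟩ := exists_forall_intervalIntegrable_of_integrableAtFilter hg
  have hcont := intervalIntegral.continuousOn_primitive_interval'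
    (hint R (right_mem_Icc.2 hR.le)) left_mem_uIcc 0 left_mem_uIcc
  rw [ContinuousWithinAt, intervalIntegral.integral_same, uIcc_of_le hR.le] at hcont
  refine hcont.mono_left ?_
  rw [← nhdsWithin_Ioo_eq_nhdsGT hR]
  exact nhdsWithin_mono 0 Ioo_subset_Icc_self

end PrimitiveFromZero

/-- The exponential of the primitive of `p` based at `x₀`: an integrating factor for the linear
equation `y' + p y = f`. -/
noncomputable def integratingFactor (p : ℝ → ℝ) (x₀ r : ℝ) : ℝ :=
  Real.exp (∫ u in x₀..r, p u)

/-- The variation-of-constants solution of `y' + p y = f` started at the origin, where `p` and `f`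
may be singular. -/
noncomputable def duhamel (p f : ℝ → ℝ) (r : ℝ) : ℝ :=
  ∫ ρ in Ioo 0 r, f ρ * Real.exp (-∫ u in ρ..r, p u)

section IntegratingFactor

variable {p : ℝ → ℝ} {S : Set ℝ} {x₀ r : ℝ}

theorem integratingFactor_pos (p : ℝ → ℝ) (x₀ r : ℝ) : 0 < integratingFactor p x₀ r :=
  Real.exp_pos _

theorem hasDerivAt_integratingFactor (hp : ContinuousOn p S) (hSo : IsOpen S)
    (hS : S.OrdConnected) (hx₀ : x₀ ∈ S) (hr : r ∈ S) :
    HasDerivAt (integratingFactor p x₀) (p r * integratingFactor p x₀ r) r := by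
  rw [mul_comm]
  exact (intervalIntegral.integral_hasDerivAt_right
    (hp.mono (hS.uIcc_subset hx₀ hr)).intervalIntegrable
    (hp.stronglyMeasurableAtFilter hSo r hr) (hp.continuousAt (hSo.mem_nhds hr))).exp

theorem exp_neg_integral_eq_integratingFactor_div {ρ : ℝ} (hp : ContinuousOn p S)
    (hS : S.OrdConnected) (hx₀ : x₀ ∈ S) (hρ : ρ ∈ S) (hr : r ∈ S) :
    Real.exp (-∫ u in ρ..r, p u) = integratingFactor p x₀ ρ / integratingFactor p x₀ r := by
  rw [integratingFactor, integratingFactor, ← Real.exp_sub, ← intervalIntegral.integral_symm,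
    intervalIntegral.integral_interval_sub_left]
  · exact (hp.mono (hS.uIcc_subset hx₀ hρ)).intervalIntegrable
  · exact (hp.mono (hS.uIcc_subset hx₀ hr)).intervalIntegrable

theorem duhamel_eq_div_integratingFactor {R : ℝ} (f : ℝ → ℝ) (hp : ContinuousOn p (Ioo 0 R))
    (hx₀ : x₀ ∈ Ioo 0 R) (hr : r ∈ Ioo 0 R) :
    duhamel p f r =
      (∫ ρ in (0 : ℝ)..r, f ρ * integratingFactor p x₀ ρ) / integratingFactor p x₀ r := by
  rw [duhamel, intervalIntegral.integral_of_le hr.1.le, integral_Ioc_eq_integral_Ioo,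
    ← integral_div]
  refine setIntegral_congr_fun measurableSet_Ioo fun ρ hρ ↦ ?_
  have hρR : ρ ∈ Ioo 0 R := ⟨hρ.1, hρ.2.trans hr.2⟩
  simp only [exp_neg_integral_eq_integratingFactor_div hp ordConnected_Ioo hx₀ hρR hr,
    mul_div_assoc]

end IntegratingFactor

section SingularLinearODE

variable {p f : ℝ → ℝ} {ν A s : ℝ}

theorem exists_integratingFactor (hp : ∀ᶠ r in 𝓝[>] 0, ContinuousAt p r) :
    ∃ E : ℝ → ℝ, (∀ r, 0 < E r) ∧ (∀ᶠ r in 𝓝[>] 0, HasDerivAt E (p r * E r) r) ∧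
      ∀ f : ℝ → ℝ, ∀ᶠ r in 𝓝[>] 0, duhamel p f r = (∫ ρ in (0 : ℝ)..r, f ρ * E ρ) / E r := by
  obtain ⟨R, hR : 0 < R, hpR⟩ := mem_nhdsGT_iff_exists_Ioo_subset.1 hp
  have hcont : ContinuousOn p (Ioo 0 R) := fun r hr ↦ (hpR hr).continuousWithinAt
  have hmid : R / 2 ∈ Ioo 0 R := ⟨half_pos hR, half_lt_self hR⟩
  refine ⟨integratingFactor p (R / 2), integratingFactor_pos p _, ?_, fun f ↦ ?_⟩
  · filter_upwards [Ioo_mem_nhdsGT hR] with r hr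
    exact hasDerivAt_integratingFactor hcont isOpen_Ioo ordConnected_Ioo hmid hr
  · filter_upwards [Ioo_mem_nhdsGT hR] with r hr
    exact duhamel_eq_div_integratingFactor f hcont hmid hr

theorem integrableAtFilter_mul_integratingFactor {E : ℝ → ℝ}
    (hE : ∀ᶠ r in 𝓝[>] 0, 0 ≤ E r) (hderiv : ∀ᶠ r in 𝓝[>] 0, HasDerivAt E (p r * E r) r)
    (hpν : Tendsto (fun r ↦ p r * r) (𝓝[>] 0) (𝓝 ν))
    (hf : ∀ᶠ r in 𝓝[>] 0, ContinuousAt f r)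
    (hfA : Tendsto (fun r ↦ f r / r ^ (s - 1)) (𝓝[>] 0) (𝓝 A)) (hνs : 0 < ν + s) :
    IntegrableAtFilter (fun r ↦ f r * E r) (𝓝[>] 0) := by
  obtain ⟨θ, hsθ, hθν⟩ := exists_between (show -s < ν by linarith)
  refine integrableAtFilter_of_isBigO_rpow ?_ (isBigO_rpow_add_of_isBigO_rpow
    (isBigO_rpow_of_tendsto_div hfA) (isBigO_rpow_of_hasDerivAt_mul hE hderiv hpν hθν))
    (by linarith)
  filter_upwards [hf, hderiv] with r hfr hEr using hfr.mul hEr.continuousAt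

theorem eventually_hasDerivAt_duhamel (hp : ∀ᶠ r in 𝓝[>] 0, ContinuousAt p r)
    (hpν : Tendsto (fun r ↦ p r * r) (𝓝[>] 0) (𝓝 ν))
    (hf : ∀ᶠ r in 𝓝[>] 0, ContinuousAt f r)
    (hfA : Tendsto (fun r ↦ f r / r ^ (s - 1)) (𝓝[>] 0) (𝓝 A)) (hνs : 0 < ν + s) :
    ∀ᶠ r in 𝓝[>] 0, HasDerivAt (duhamel p f) (f r - p r * duhamel p f r) r := by
  obtain ⟨E, hE, hE', hduhamel⟩ := exists_integratingFactor hp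
  have hE₀ : ∀ᶠ r in 𝓝[>] 0, 0 ≤ E r := .of_forall fun r ↦ (hE r).le
  have hint := integrableAtFilter_mul_integratingFactor hE₀ hE' hpν hf hfA hνs
  have hprim := eventually_hasDerivAt_integral_of_integrableAtFilter hint
    (hf.and hE' |>.mono fun r h ↦ h.1.mul h.2.continuousAt)
  filter_upwards [self_mem_nhdsWithin, hE', hprim, hduhamel f,
    eventually_eventually_nhdsWithin.2 (hduhamel f)] with r hr hEr hprimr heq hnear
  rw [isOpen_Ioi.nhdsWithin_eq hr] at hnear
  refine ((hprimr.div hEr (hE r).ne').congr_of_eventuallyEq hnear).congr_deriv ?_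
  have := (hE r).ne'
  rw [heq]
  field_simp

theorem tendsto_duhamel_div_rpow (hp : ∀ᶠ r in 𝓝[>] 0, ContinuousAt p r)
    (hpν : Tendsto (fun r ↦ p r * r) (𝓝[>] 0) (𝓝 ν))
    (hf : ∀ᶠ r in 𝓝[>] 0, ContinuousAt f r)
    (hfA : Tendsto (fun r ↦ f r / r ^ (s - 1)) (𝓝[>] 0) (𝓝 A)) (hνs : 0 < ν + s) :
    Tendsto (fun r ↦ duhamel p f r / r ^ s) (𝓝[>] 0) (𝓝 (A / (ν + s))) := by
  obtain ⟨E, hE, hE', hduhamel⟩ := exists_integratingFactor hp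
  have hE₀ : ∀ᶠ r in 𝓝[>] 0, 0 ≤ E r := .of_forall fun r ↦ (hE r).le
  have hint := integrableAtFilter_mul_integratingFactor hE₀ hE' hpν hf hfA hνs
  have hnum := eventually_hasDerivAt_integral_of_integrableAtFilter hint
    (hf.and hE' |>.mono fun r h ↦ h.1.mul h.2.continuousAt)
  have hden : ∀ᶠ r in 𝓝[>] 0, HasDerivAt (fun r ↦ r ^ s * E r)
      (r ^ (s - 1) * E r * (p r * r + s)) r := by
    filter_upwards [self_mem_nhdsWithin, hE'] with r (hr : 0 < r) hEr
    refine ((Real.hasDerivAt_rpow_const (Or.inl hr.ne')).mul hEr).congr_deriv ?_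
    rw [Real.rpow_sub_one hr.ne']
    field_simp
    ring
  have hden_zero : Tendsto (fun r ↦ r ^ s * E r) (𝓝[>] 0) (𝓝 0) := by
    obtain ⟨θ, hsθ, hθν⟩ := exists_between (show -s < ν by linarith)
    exact (isBigO_rpow_add_of_isBigO_rpow (isBigO_refl _ _)
      (isBigO_rpow_of_hasDerivAt_mul hE₀ hE' hpν hθν)).trans_tendsto
      (tendsto_rpow_nhdsGT_zero (by linarith))
  have hpνs : Tendsto (fun r ↦ p r * r + s) (𝓝[>] 0) (𝓝 (ν + s)) := hpν.add_const s
  have hquot : Tendsto (fun r ↦ (∫ ρ in (0 : ℝ)..r, f ρ * E ρ) / (r ^ s * E r)) (𝓝[>] 0)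
      (𝓝 (A / (ν + s))) := by
    refine HasDerivAt.lhopital_zero_nhdsGT hnum hden ?_
      (tendsto_integral_nhdsGT_zero_of_integrableAtFilter hint) hden_zero ?_
    · filter_upwards [self_mem_nhdsWithin, hpνs.eventually_ne hνs.ne'] with r (hr : 0 < r) hne
      exact mul_ne_zero (mul_pos (Real.rpow_pos_of_pos hr _) (hE r)).ne' hne
    · refine (hfA.div hpνs hνs.ne').congr fun r ↦ ?_
      rw [Pi.div_apply, mul_right_comm, mul_div_mul_right _ _ (hE r).ne', div_div]
  refine hquot.congr' ?_
  filter_upwards [hduhamel f] with r hr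
  rw [hr, div_div, mul_comm]

theorem hasPowerAsymp_duhamel (hp : ∀ᶠ r in 𝓝[>] 0, ContinuousAt p r)
    (hpν : Tendsto (fun r ↦ p r * r) (𝓝[>] 0) (𝓝 ν))
    (hf : ∀ᶠ r in 𝓝[>] 0, ContinuousAt f r)
    (hfA : Tendsto (fun r ↦ f r / r ^ (s - 1)) (𝓝[>] 0) (𝓝 A)) (hνs : 0 < ν + s) :
    HasPowerAsymp (duhamel p f) (A / (ν + s)) s := by
  have hderiv := eventually_hasDerivAt_duhamel hp hpν hf hfA hνs
  have hlim := tendsto_duhamel_div_rpow hp hpν hf hfA hνs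
  refine ⟨hderiv.mono fun _ h ↦ h.differentiableAt, hlim, ?_⟩
  have hlim_deriv := hfA.sub (hpν.mul hlim)
  rw [show A - ν * (A / (ν + s)) = s * (A / (ν + s)) by field_simp; ring] at hlim_deriv
  refine hlim_deriv.congr' ?_
  filter_upwards [self_mem_nhdsWithin, hderiv] with r (hr : 0 < r) hr'
  have hs := (Real.rpow_pos_of_pos hr s).ne'
  rw [hr'.deriv, Real.rpow_sub_one hr.ne']
  field_simp

end SingularLinearODE

/-- The function `Φ`, that is, the solution `ξ'` of `b_L y' + ((d - 1) / r) b_N y = r ^ (-δ)`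
started at the origin. The dimension `d` is allowed to be real. -/
noncomputable def phi (d δ : ℝ) (bL bN : ℝ → ℝ) (r : ℝ) : ℝ :=
  ∫ ρ in Ioo (0 : ℝ) r,
    ρ ^ (-δ) / bL ρ * Real.exp (-(d - 1) * ∫ u in ρ..r, bN u / (bL u * u))

/-- The coefficient `q̃ = ξ'' + ((d - 1) / r) ξ'`, with `ξ''` eliminated through the equation
solved by `ξ' = Φ`. -/
noncomputable def qtilde (d δ : ℝ) (bL bN : ℝ → ℝ) (r : ℝ) : ℝ :=
  r ^ (-δ) / bL r + (d - 1) * (1 - bN r / bL r) * phi d δ bL bN r / r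

theorem phi_eq_duhamel (d δ : ℝ) (bL bN : ℝ → ℝ) :
    phi d δ bL bN =
      duhamel (fun r ↦ (d - 1) * (bN r / (bL r * r))) (fun r ↦ r ^ (-δ) / bL r) := by
  funext r
  simp only [phi, duhamel, intervalIntegral.integral_const_mul, neg_mul]

section Qtilde

variable {d α β δ : ℝ} {bL bN : ℝ → ℝ}

theorem hasPowerAsymp_phi (hL : HasPowerAsymp bL 1 (2 * α)) (hN : HasPowerAsymp bN β (2 * α))
    (hc : 0 < (d - 1) * β + (1 - 2 * α - δ)) :
    HasPowerAsymp (phi d δ bL bN) (1 / ((d - 1) * β + (1 - 2 * α - δ))) (1 - 2 * α - δ) := by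
  have hsource : HasPowerAsymp (fun r ↦ r ^ (-δ) / bL r) 1 (1 - 2 * α - δ - 1) := by
    convert (HasPowerAsymp.rpow (-δ)).div hL one_ne_zero using 1 <;> ring
  have hdamping : HasPowerAsymp (fun r ↦ (d - 1) * (bN r / (bL r * r))) ((d - 1) * β) (-1) := by
    convert (hN.div (hL.mul HasPowerAsymp.id) (by norm_num)).const_mul (d - 1) using 1 <;> ring
  rw [phi_eq_duhamel]
  refine hasPowerAsymp_duhamel hdamping.continuousAt ?_ hsource.continuousAt hsource.tendsto hc
  simpa only [Real.rpow_neg_one, div_inv_eq_mul] using hdamping.tendsto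

theorem hasPowerAsymp_qtilde (hL : HasPowerAsymp bL 1 (2 * α)) (hN : HasPowerAsymp bN β (2 * α))
    (hc : 0 < (d - 1) * β + (1 - 2 * α - δ)) :
    HasPowerAsymp (qtilde d δ bL bN) ((d - 2 * α - δ) / ((d - 1) * β + (1 - 2 * α - δ)))
      (-(2 * α + δ)) := by
  have hsource : HasPowerAsymp (fun r ↦ r ^ (-δ) / bL r) 1 (-(2 * α + δ)) := by
    convert (HasPowerAsymp.rpow (-δ)).div hL one_ne_zero using 1 <;> ring
  have hratio : HasPowerAsymp (fun r ↦ bN r / bL r) β 0 := by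
    simpa using hN.div hL one_ne_zero
  have hdrift : HasPowerAsymp (fun r ↦ (d - 1) * (1 - bN r / bL r) * phi d δ bL bN r / r)
      ((d - 1) * (1 - β) / ((d - 1) * β + (1 - 2 * α - δ))) (-(2 * α + δ)) := by
    convert (((((HasPowerAsymp.const 1).sub hratio).const_mul (d - 1)).mul
      (hasPowerAsymp_phi hL hN hc)).div HasPowerAsymp.id one_ne_zero) using 1 <;> ring
  rw [show (d - 2 * α - δ) / ((d - 1) * β + (1 - 2 * α - δ)) =
    1 + (d - 1) * (1 - β) / ((d - 1) * β + (1 - 2 * α - δ)) by field_simp; ring]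
  exact hsource.add hdrift

theorem qtilde_decreasing_general (hL : HasPowerAsymp bL 1 (2 * α))
    (hN : HasPowerAsymp bN β (2 * α)) (hδ : 0 < 2 * α + δ) (hδd : 2 * α + δ < d)
    (hδβ : 2 * α + δ < (d - 1) * β + 1) :
    ∃ ℓ > 0, (∀ r ∈ Ioo 0 ℓ, DifferentiableAt ℝ (qtilde d δ bL bN) r ∧
        deriv (qtilde d δ bL bN) r < 0) ∧
      StrictAntiOn (qtilde d δ bL bN) (Ioo 0 ℓ) := by
  have hc : 0 < (d - 1) * β + (1 - 2 * α - δ) := by linarith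
  refine (hasPowerAsymp_qtilde hL hN hc).exists_strictAntiOn ?_
  exact mul_neg_of_neg_of_pos (neg_neg_of_pos hδ) (div_pos (by linarith) hc)

end Qtilde

/-- Monotonicity of the coefficient `q̃` near the origin: with
`Φ(r) = ∫₀^r (ρ^{−δ}/b_L(ρ)) exp(−(d−1)∫_ρ^r b_N(u)/(b_L(u)u) du) dρ` and
`q̃(r) = r^{−δ}/b_L(r) + (d−1)(1 − b_N(r)/b_L(r)) Φ(r)/r`,
there is `ℓ > 0` such that `q̃` is differentiable with nonpositive derivative on `(0,ℓ)`,
hence nonincreasing there. -/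
theorem qtilde_decreasing (d : ℕ) (hd : 2 ≤ d) (α β δ : ℝ)
    (hα : α ∈ Ioo (0:ℝ) 1) (hβ : (2*α - 1) / ((d:ℝ) - 1) < β)
    (hδ : δ ∈ Ioo (0:ℝ) (min (1 - α) (((d:ℝ) - 1) * β + 1 - 2*α)))
    (bL bN : ℝ → ℝ)
    (hbLpos : ∀ r, 0 < r → 0 < bL r)
    (hbLdiff : ∀ r, 0 < r → DifferentiableAt ℝ bL r)
    (hbNdiff : ∀ r, 0 < r → DifferentiableAt ℝ bN r)
    (hbLlim : Tendsto (fun r : ℝ => bL r / r ^ (2*α)) (nhdsWithin 0 (Ioi 0)) (nhds 1))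
    (hbNlim : Tendsto (fun r : ℝ => bN r / r ^ (2*α)) (nhdsWithin 0 (Ioi 0)) (nhds β))
    (hbLdlim : Tendsto (fun r : ℝ => deriv bL r / r ^ (2*α - 1)) (nhdsWithin 0 (Ioi 0))
      (nhds (2*α)))
    (hbNdlim : Tendsto (fun r : ℝ => deriv bN r / r ^ (2*α - 1)) (nhdsWithin 0 (Ioi 0))
      (nhds (2*α*β))) :
    ∃ ℓ : ℝ, 0 < ℓ ∧
      (∀ r ∈ Ioo (0:ℝ) ℓ,
        DifferentiableAt ℝ
          (fun r : ℝ => r ^ (-δ) / bL r +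
            ((d:ℝ) - 1) * (1 - bN r / bL r) *
              (∫ ρ in Ioo (0:ℝ) r,
                ρ ^ (-δ) / bL ρ *
                  Real.exp (-((d:ℝ) - 1) * ∫ u in ρ..r, bN u / (bL u * u))) / r) r ∧
        deriv
          (fun r : ℝ => r ^ (-δ) / bL r +
            ((d:ℝ) - 1) * (1 - bN r / bL r) *
              (∫ ρ in Ioo (0:ℝ) r,
                ρ ^ (-δ) / bL ρ *
                  Real.exp (-((d:ℝ) - 1) * ∫ u in ρ..r, bN u / (bL u * u))) / r) r ≤ 0) ∧
      AntitoneOn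
        (fun r : ℝ => r ^ (-δ) / bL r +
          ((d:ℝ) - 1) * (1 - bN r / bL r) *
            (∫ ρ in Ioo (0:ℝ) r,
              ρ ^ (-δ) / bL ρ *
                Real.exp (-((d:ℝ) - 1) * ∫ u in ρ..r, bN u / (bL u * u))) / r)
        (Ioo 0 ℓ) := by
  have hpos : ∀ᶠ r : ℝ in 𝓝[>] 0, 0 < r := self_mem_nhdsWithin
  have hL : HasPowerAsymp bL 1 (2 * α) := ⟨hpos.mono hbLdiff, hbLlim, by simpa using hbLdlim⟩
  have hN : HasPowerAsymp bN β (2 * α) := ⟨hpos.mono hbNdiff, hbNlim, hbNdlim⟩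
  obtain ⟨hδα, hδβ⟩ := lt_min_iff.1 hδ.2
  have hd' : (2 : ℝ) ≤ d := by exact_mod_cast hd
  obtain ⟨ℓ, hℓ, hderiv, hanti⟩ := qtilde_decreasing_general (d := d) (δ := δ) hL hN
    (by linarith [hα.1, hδ.1]) (by linarith [hα.2, hδ.1]) (by linarith)
  exact ⟨ℓ, hℓ, fun r hr ↦ ⟨(hderiv r hr).1, (hderiv r hr).2.le⟩, hanti.antitoneOn⟩
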